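/- Let p > 2 and assume p − 1 < λ < ∞ if N ≤ p(p+3)/(p−1), and p − 1 < λ < Λ_c(N, p) if N > p(p+3)/(p−1). If u ∈ C^1(ℝ^N) is a stable weak solution of −Δ_p u = |u|^{λ−1} u on all of ℝ^N, then u ≡ 0. -/

import Mathlib

open MeasureTheory
open scoped RealInnerProductSpace

/-- The critical exponent `Λ_c(N, p)`. -/
noncomputable def LambdaC (N : ℕ) (p : ℝ) : ℝ :=
  (((p - 1) * N - p) ^ 2 + p ^ 2 * (p - 2) - p ^ 2 * (p - 1) * N +
      2 * p ^ 2 * Real.sqrt ((p - 1) * (N - 1))) /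
    ((N - p) * ((p - 1) * N - p * (p + 3)))

/-!
Test the stability inequality with `|u| ^ ((γ - 1) / 2) u ζ ^ (q / 2)` and the equation with
`|u| ^ (γ - 1) u ζ ^ q`, where `ζ ≥ 0` is a cutoff. If `4 γ λ > (p - 1) (γ + 1) ^ 2`, a combination
of the two controls both `|∇u| ^ p |u| ^ (γ - 1) ζ ^ q` and `|u| ^ (λ + γ) ζ ^ q`. The terms
containing `∇ζ` are absorbed by Young's inequality, which forces `q = p (λ + γ) / (λ - p + 1)` and
leaves `∫ |u| ^ (λ + γ) ζ ^ q ≤ C ∫ |∇ζ| ^ q`. For cutoffs at scale `R` the right-hand side is of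
order `R ^ (N - q)`, so `u = 0` as soon as `N < q`. The bound `λ < Λ_c(N, p)` is what makes an
admissible `γ` with `N < q` available.
-/

section Exponents

variable {N : ℕ} {p lam γ : ℝ}

/-- The exponent `λ` at which the test power `γ` stops being admissible: comparing the stability
inequality tested with `|u| ^ ((γ - 1) / 2) u ζ ^ (q / 2)` and the equation tested with
`|u| ^ (γ - 1) u ζ ^ q` gives an energy estimate for `λ` above this value. -/
noncomputable def powerThreshold (p γ : ℝ) : ℝ := (p - 1) * (γ + 1) ^ 2 / (4 * γ)

/-- The exponent `q = p (λ + γ) / (λ - p + 1)` of `|∇ζ|` in the energy estimate for `|u| ^ (λ + γ)`,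
dictated by Young's inequality. -/
noncomputable def energyExponent (p lam γ : ℝ) : ℝ := p * (lam + γ) / (lam - p + 1)

/-- The test power `γ` at which the energy exponent for `λ = powerThreshold p γ` equals the
dimension `N`. -/
noncomputable def criticalTestPower (N : ℕ) (p : ℝ) : ℝ :=
  (√((p - 1) * (N - 1)) + p - 1) / (√((p - 1) * (N - 1)) - p - 1)

lemma strictMonoOn_powerThreshold (hp : 1 < p) :
    StrictMonoOn (powerThreshold p) (Set.Ici 1) := by
  intro a ha b hb hab
  rw [Set.mem_Ici] at ha hb
  have hab1 : 0 < a * b - 1 := by nlinarith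
  have key : 0 < (p - 1) * ((b - a) * (a * b - 1)) :=
    mul_pos (by linarith) (mul_pos (by linarith) hab1)
  unfold powerThreshold
  rw [div_lt_div_iff₀ (by linarith) (by linarith)]
  linarith

-- With `γ = s²`, the equation reads `s + s⁻¹ = 2 √(λ / (p - 1))`.
lemma exists_powerThreshold_eq (hp : 1 < p) (hlam : p - 1 < lam) :
    ∃ γ, 1 < γ ∧ powerThreshold p γ = lam := by
  have hk : 0 < p - 1 := by linarith
  have ha : √lam ^ 2 = lam := Real.sq_sqrt (by linarith)
  have hb : √(lam - (p - 1)) ^ 2 = lam - (p - 1) := Real.sq_sqrt (by linarith)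
  have hb0 : 0 < √(lam - (p - 1)) := Real.sqrt_pos.2 (by linarith)
  have ha0 : 0 < √lam := Real.sqrt_pos.2 (by linarith)
  set a := √lam
  set b := √(lam - (p - 1))
  have hab : a ^ 2 - b ^ 2 = p - 1 := by linarith
  refine ⟨(a + b) ^ 2 / (p - 1), ?_, ?_⟩
  · rw [one_lt_div hk]
    nlinarith
  · unfold powerThreshold
    have hsum : (a + b) ^ 2 + (p - 1) = 2 * a * (a + b) := by rw [← hab]; ring
    rw [div_add_one hk.ne', hsum, ← ha]
    field_simp
    ring

lemma sq_sqrt_sub_one_mul (hN : p * (p + 3) < (p - 1) * N) :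
    √((p - 1) * (N - 1)) ^ 2 = (p - 1) * N - (p - 1) := by
  rw [Real.sq_sqrt (by linarith [sq_nonneg (p + 1)])]
  ring

lemma add_one_lt_sqrt (hN : p * (p + 3) < (p - 1) * N) :
    p + 1 < √((p - 1) * (N - 1)) := by
  apply Real.lt_sqrt_of_sq_lt
  linarith

-- `N - 1 = s² / (p - 1)` for `s = √((p - 1) (N - 1))` makes `Λ_c` a rational function of `s`.
lemma LambdaC_eq_powerThreshold (hp : 1 < p) (hN : p * (p + 3) < (p - 1) * N) :
    LambdaC N p = powerThreshold p (criticalTestPower N p) := by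
  have hs := add_one_lt_sqrt hN
  have hs2 := sq_sqrt_sub_one_mul hN
  unfold LambdaC powerThreshold criticalTestPower
  set s := √((p - 1) * (N - 1))
  have hk : 0 < p - 1 := by linarith
  have hk0 : p - 1 ≠ 0 := hk.ne'
  have h₁ : s - p - 1 ≠ 0 := by linarith
  have h₂ : s + p - 1 ≠ 0 := by linarith
  have h₃ : s + p + 1 ≠ 0 := by linarith
  have h₄ : s - p + 1 ≠ 0 := by linarith
  have hN : (N : ℝ) = (s ^ 2 + (p - 1)) / (p - 1) := by
    rw [eq_div_iff hk0]
    linarith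
  have hnum : ((p - 1) * N - p) ^ 2 + p ^ 2 * (p - 2) - p ^ 2 * (p - 1) * N + 2 * p ^ 2 * s =
      (s - 1) ^ 2 * (s - p + 1) * (s + p + 1) := by
    rw [hN]; field_simp; ring
  have hden : ((N : ℝ) - p) * ((p - 1) * N - p * (p + 3)) =
      (s + p - 1) * (s - p + 1) / (p - 1) * ((s - p - 1) * (s + p + 1)) := by
    rw [hN]; field_simp; ring
  have hsum : (s + p - 1) / (s - p - 1) + 1 = 2 * (s - 1) / (s - p - 1) := by
    field_simp; ring
  rw [hnum, hden, hsum]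
  field_simp
  ring

lemma mul_powerThreshold_sub_lt (hp : 1 < p) (hγ : 1 < γ)
    (hcrit : p * (p + 3) < (p - 1) * N → γ < criticalTestPower N p) :
    N * (powerThreshold p γ - (p - 1)) < p * (powerThreshold p γ + γ) := by
  obtain ⟨h, rfl⟩ : ∃ h, γ = h + 1 := ⟨γ - 1, by ring⟩
  have hh : 0 < h := by linarith
  have key : (p - 1) * N * h ^ 2 < p * (p + 3) * h ^ 2 + 4 * p * (p + 1) * h + 4 * p ^ 2 := by
    rcases le_or_gt ((p - 1) * N) (p * (p + 3)) with hN | hN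
    · have : (p - 1) * N * h ^ 2 ≤ p * (p + 3) * h ^ 2 := by gcongr
      have : 0 < 4 * p * (p + 1) * h + 4 * p ^ 2 := by positivity
      linarith
    · have hs := add_one_lt_sqrt hN
      have hs2 := sq_sqrt_sub_one_mul hN
      have hlt := hcrit hN
      unfold criticalTestPower at hlt
      set s := √((p - 1) * (N - 1))
      rw [lt_div_iff₀ (by linarith)] at hlt
      have hc : 0 < (s - p - 1) * h := mul_pos (by linarith) hh
      have hch : (s - p - 1) * h < 2 * p := by linarith
      have hsq : ((s - p - 1) * h) ^ 2 < (2 * p) ^ 2 := by gcongr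
      have hlin : 2 * (p + 1) * h * ((s - p - 1) * h) < 2 * (p + 1) * h * (2 * p) := by gcongr
      have hNs : (p - 1) * N = s ^ 2 + (p - 1) := by linarith
      rw [hNs]
      linarith
  have hsub : powerThreshold p (h + 1) - (p - 1) = (p - 1) * h ^ 2 / (4 * (h + 1)) := by
    unfold powerThreshold; field_simp; ring
  have hadd : p * (powerThreshold p (h + 1) + (h + 1)) =
      (p * (p + 3) * h ^ 2 + 4 * p * (p + 1) * h + 4 * p ^ 2) / (4 * (h + 1)) := by
    unfold powerThreshold; field_simp; ring
  rw [hsub, hadd, mul_div_assoc', mul_left_comm, ← mul_assoc]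
  gcongr

lemma exists_admissible_testPower (hp : 1 < p) (hlam : p - 1 < lam)
    (hcrit : (N : ℝ) > p * (p + 3) / (p - 1) → lam < LambdaC N p) :
    ∃ γ, 1 < γ ∧ powerThreshold p γ < lam ∧ N < energyExponent p lam γ := by
  have hmono := strictMonoOn_powerThreshold hp
  obtain ⟨γ₁, hγ₁, hlam_eq⟩ := exists_powerThreshold_eq hp hlam
  have hγ₁_lt : p * (p + 3) < (p - 1) * N → γ₁ < criticalTestPower N p := by
    intro hN
    have hs := add_one_lt_sqrt hN
    have hone : 1 < criticalTestPower N p := by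
      rw [criticalTestPower, one_lt_div] <;> linarith
    rw [← hmono.lt_iff_lt hγ₁.le hone.le, hlam_eq, ← LambdaC_eq_powerThreshold hp hN]
    apply hcrit
    rwa [gt_iff_lt, div_lt_iff₀' (by linarith)]
  have hdim := mul_powerThreshold_sub_lt hp hγ₁ hγ₁_lt
  rw [hlam_eq] at hdim
  have hlower : N * (lam - (p - 1)) / p - lam < γ₁ := by
    rw [sub_lt_iff_lt_add', div_lt_iff₀' (by linarith)]
    exact hdim
  obtain ⟨γ, hγ_lower, hγ_upper⟩ := exists_between (max_lt hγ₁ hlower)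
  obtain ⟨hγ, hγN⟩ := max_lt_iff.1 hγ_lower
  refine ⟨γ, hγ, hlam_eq ▸ hmono hγ.le hγ₁.le hγ_upper, ?_⟩
  rw [sub_lt_iff_lt_add', div_lt_iff₀' (by linarith)] at hγN
  rw [energyExponent, lt_div_iff₀ (by linarith)]
  linarith

lemma lt_energyExponent (hp : 1 < p) (hlam : p - 1 < lam) (hγ : 1 < γ) :
    p < energyExponent p lam γ := by
  rw [energyExponent, lt_div_iff₀ (by linarith)]
  gcongr
  linarith

end Exponents

section Young

variable {p lam γ θ K ε : ℝ}

lemma exists_mul_rpow_mul_rpow_mul_rpow_le {w₁ w₂ w₃ : ℝ} (hw₁ : 0 ≤ w₁) (hw₂ : 0 ≤ w₂)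
    (hw₃ : 0 < w₃) (hw : w₁ + w₂ + w₃ = 1) (hK : 0 ≤ K) (hε : 0 < ε) :
    ∃ C, 0 ≤ C ∧ ∀ X Y D : ℝ, 0 ≤ X → 0 ≤ Y → 0 ≤ D →
      K * (X ^ w₁ * Y ^ w₂ * D ^ w₃) ≤ ε * (X + Y) + C * D := by
  set M := (K / ε ^ (w₁ + w₂)) ^ w₃⁻¹ with hM_def
  have hM : 0 ≤ M := by positivity
  have hMw : M ^ w₃ = K / (ε ^ w₁ * ε ^ w₂) := by
    rw [hM_def, Real.rpow_inv_rpow (by positivity) hw₃.ne', Real.rpow_add hε]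
  refine ⟨M, hM, fun X Y D hX hY hD => ?_⟩
  have hεX := mul_nonneg hε.le hX
  have hεY := mul_nonneg hε.le hY
  have hMD := mul_nonneg hM hD
  calc K * (X ^ w₁ * Y ^ w₂ * D ^ w₃)
      = (ε * X) ^ w₁ * (ε * Y) ^ w₂ * (M * D) ^ w₃ := by
        rw [Real.mul_rpow hε.le hX, Real.mul_rpow hε.le hY, Real.mul_rpow hM hD, hMw]
        have := Real.rpow_pos_of_pos hε w₁
        have := Real.rpow_pos_of_pos hε w₂
        field_simp
    _ ≤ w₁ * (ε * X) + w₂ * (ε * Y) + w₃ * (M * D) :=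
        Real.geom_mean_le_arith_mean3_weighted hw₁ hw₂ hw₃.le hεX hεY hMD hw
    _ ≤ 1 * (ε * X) + 1 * (ε * Y) + 1 * (M * D) := by gcongr <;> linarith
    _ = ε * (X + Y) + M * D := by ring

lemma youngWeight_add_eq_one (hp : 1 < p) (hlam : p - 1 < lam) (hγ : 1 < γ) :
    θ * (γ + p - 1) / (p * (lam + γ)) + (1 - θ / p) + θ / energyExponent p lam γ = 1 := by
  have : lam - p + 1 ≠ 0 := by linarith
  have : lam + γ ≠ 0 := by linarith
  unfold energyExponent
  field_simp
  ring

lemma rpow_mul_rpow_mul_rpow_mul_rpow_eq {a t z d : ℝ} (hp : 1 < p) (hlam : p - 1 < lam)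
    (hγ : 1 < γ) (hθ : 0 < θ) (hθp : θ ≤ p) (ha : 0 ≤ a) (ht : 0 ≤ t) (hz : 0 ≤ z) (hd : 0 ≤ d) :
    a ^ (p - θ) * t ^ (γ - 1 + θ) * z ^ (energyExponent p lam γ - θ) * d ^ θ =
      (t ^ (lam + γ) * z ^ energyExponent p lam γ) ^ (θ * (γ + p - 1) / (p * (lam + γ))) *
        (a ^ p * t ^ (γ - 1) * z ^ energyExponent p lam γ) ^ (1 - θ / p) *
        (d ^ energyExponent p lam γ) ^ (θ / energyExponent p lam γ) := by
  have hw := youngWeight_add_eq_one (θ := θ) hp hlam hγ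
  have hq : 0 < energyExponent p lam γ := by linarith [lt_energyExponent hp hlam hγ]
  set q := energyExponent p lam γ
  set w := θ * (γ + p - 1) / (p * (lam + γ)) with hw_def
  have hp₀ : 0 < p := by linarith
  have hlamγ : 0 < lam + γ := by linarith
  have hw₁ : 0 ≤ w := div_nonneg (mul_nonneg hθ.le (by linarith)) (by positivity)
  have hw₂ : 0 ≤ 1 - θ / p := sub_nonneg.2 ((div_le_one hp₀).2 hθp)
  have hd_exp : q * (θ / q) = θ := mul_div_cancel₀ θ hq.ne'
  have ha_exp : p * (1 - θ / p) = p - θ := by field_simp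
  have ht_exp : (lam + γ) * w + (γ - 1) * (1 - θ / p) = γ - 1 + θ := by
    rw [hw_def]; field_simp; ring
  have hz_exp : q * w + q * (1 - θ / p) = q - θ := by linear_combination q * hw - hd_exp
  rw [← ha_exp, ← ht_exp, ← hz_exp, Real.mul_rpow (by positivity) (by positivity),
    Real.mul_rpow (by positivity) (by positivity), Real.mul_rpow (by positivity) (by positivity),
    Real.rpow_add_of_nonneg ht (by positivity) (mul_nonneg (by linarith) hw₂),
    Real.rpow_add_of_nonneg hz (by positivity) (by positivity), ← Real.rpow_mul hd, hd_exp]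
  simp only [Real.rpow_mul, ha, ht, hz]
  ring

lemma exists_mul_rpow_mul_rpow_mul_rpow_mul_rpow_le (hp : 1 < p) (hlam : p - 1 < lam)
    (hγ : 1 < γ) (hθ : 0 < θ) (hθp : θ ≤ p) (hK : 0 ≤ K) (hε : 0 < ε) :
    ∃ C, 0 ≤ C ∧ ∀ a t z d : ℝ, 0 ≤ a → 0 ≤ t → 0 ≤ z → 0 ≤ d →
      K * (a ^ (p - θ) * t ^ (γ - 1 + θ) * z ^ (energyExponent p lam γ - θ) * d ^ θ) ≤
        ε * (t ^ (lam + γ) * z ^ energyExponent p lam γ +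
          a ^ p * t ^ (γ - 1) * z ^ energyExponent p lam γ) + C * d ^ energyExponent p lam γ := by
  have hq : 0 < energyExponent p lam γ := by linarith [lt_energyExponent hp hlam hγ]
  have hw₁ : 0 ≤ θ * (γ + p - 1) / (p * (lam + γ)) :=
    div_nonneg (mul_nonneg hθ.le (by linarith)) (mul_nonneg (by linarith) (by linarith))
  have hw₂ : 0 ≤ 1 - θ / p := sub_nonneg.2 ((div_le_one (by linarith)).2 hθp)
  obtain ⟨C, hC, hYoung⟩ := exists_mul_rpow_mul_rpow_mul_rpow_le hw₁ hw₂ (div_pos hθ hq)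
    (youngWeight_add_eq_one hp hlam hγ) hK hε
  refine ⟨C, hC, fun a t z d ha ht hz hd => ?_⟩
  rw [rpow_mul_rpow_mul_rpow_mul_rpow_eq hp hlam hγ hθ hθp ha ht hz hd]
  exact hYoung _ _ _ (by positivity) (by positivity) (by positivity)

end Young

section Gradient

open scoped Gradient

variable {E : Type*} [NormedAddCommGroup E] [InnerProductSpace ℝ E] [CompleteSpace E]
  {u v : E → ℝ} {x : E}

lemma continuous_gradient (hu : ContDiff ℝ 1 u) : Continuous (∇ u) :=
  (InnerProductSpace.toDual ℝ E).symm.continuous.comp (hu.continuous_fderiv one_ne_zero)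

lemma gradient_eq_zero_of_notMem_tsupport (hx : x ∉ tsupport u) : ∇ u x = 0 := by
  rw [gradient, image_eq_zero_of_notMem_tsupport fun h => hx (tsupport_fderiv_subset ℝ h), map_zero]

lemma hasCompactSupport_gradient (huc : HasCompactSupport u) : HasCompactSupport (∇ u) :=
  HasCompactSupport.intro huc fun _ hx => gradient_eq_zero_of_notMem_tsupport hx

lemma continuous_norm_gradient_rpow_smul {p : ℝ} (hp : 2 ≤ p) (hu : ContDiff ℝ 1 u) :
    Continuous fun x => ‖∇ u x‖ ^ (p - 2) • ∇ u x :=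
  ((continuous_gradient hu).norm.rpow_const fun _ => Or.inr (by linarith)).smul
    (continuous_gradient hu)

lemma gradient_sub (hu : DifferentiableAt ℝ u x) (hv : DifferentiableAt ℝ v x) :
    ∇ (u - v) x = ∇ u x - ∇ v x := by
  rw [gradient, fderiv_sub hu hv, map_sub, gradient, gradient]

lemma norm_gradient_sub_gradient :
    ‖∇ u x - ∇ v x‖ = ‖fderiv ℝ u x - fderiv ℝ v x‖ := by
  rw [gradient, gradient, ← map_sub, LinearIsometryEquiv.norm_map]

lemma gradient_comp_const_smul (c : ℝ) :
    ∇ (fun y => u (c • y)) x = c • ∇ u (c • x) := by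
  rw [gradient, gradient, fderiv_comp_smul, map_smul]

end Gradient

section PowerTest

open scoped Gradient

variable {β r : ℝ}

/-- The test function `|u|^β u ζ^r` built from a solution `u` and a cutoff `ζ`. -/
noncomputable def powerTest {X : Type*} (β r : ℝ) (u ζ : X → ℝ) (x : X) : ℝ :=
  |u x| ^ β * u x * ζ x ^ r

lemma hasCompactSupport_powerTest {X : Type*} [TopologicalSpace X] {u ζ : X → ℝ} (hr : r ≠ 0)
    (hζ : HasCompactSupport ζ) : HasCompactSupport (powerTest β r u ζ) :=
  (hζ.comp_left (g := fun s : ℝ => s ^ r) (Real.zero_rpow hr)).mul_left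

lemma hasDerivAt_abs_rpow_mul_self (hβ : 0 < β) (s : ℝ) :
    HasDerivAt (fun s : ℝ => |s| ^ β * s) ((β + 1) * |s| ^ β) s := by
  have hcont : Continuous fun s : ℝ => |s| ^ β :=
    continuous_abs.rpow_const fun _ => Or.inr hβ.le
  have hderiv_of_ne (y : ℝ) (hy : y ≠ 0) :
      HasDerivAt (fun s : ℝ => |s| ^ β * s) ((β + 1) * |y| ^ β) y := by
    have hy' : |y| ≠ 0 := abs_ne_zero.2 hy
    refine (((hasDerivAt_abs hy).rpow_const (Or.inl hy')).mul (hasDerivAt_id y)).congr_deriv ?_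
    calc (SignType.sign y : ℝ) * β * |y| ^ (β - 1) * y + |y| ^ β * 1
        = β * (|y| ^ (β - 1) * (SignType.sign y * y)) + |y| ^ β := by ring
      _ = (β + 1) * |y| ^ β := by
        rw [sign_mul_self, Real.rpow_sub_one hy', div_mul_cancel₀ _ hy']
        ring
  rcases eq_or_ne s 0 with rfl | hs
  · exact hasDerivAt_of_hasDerivAt_of_ne hderiv_of_ne (hcont.mul continuous_id).continuousAt
      (continuous_const.mul hcont).continuousAt
  · exact hderiv_of_ne s hs

lemma contDiff_abs_rpow_mul_self (hβ : 0 < β) : ContDiff ℝ 1 fun s : ℝ => |s| ^ β * s := by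
  have hderiv : deriv (fun s : ℝ => |s| ^ β * s) = fun s => (β + 1) * |s| ^ β :=
    funext fun s => (hasDerivAt_abs_rpow_mul_self hβ s).deriv
  rw [contDiff_one_iff_deriv, hderiv]
  exact ⟨fun s => (hasDerivAt_abs_rpow_mul_self hβ s).differentiableAt,
    continuous_const.mul (continuous_abs.rpow_const fun _ => Or.inr hβ.le)⟩

lemma continuous_abs_rpow_mul_self {X : Type*} [TopologicalSpace X] {u : X → ℝ} (hβ : 0 ≤ β)
    (hu : Continuous u) : Continuous fun x => |u x| ^ β * u x :=
  (hu.abs.rpow_const fun _ => Or.inr hβ).mul hu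

lemma contDiff_powerTest {E : Type*} [NormedAddCommGroup E] [NormedSpace ℝ E] {u ζ : E → ℝ}
    (hβ : 0 < β) (hr : 1 ≤ r) (hu : ContDiff ℝ 1 u) (hζ : ContDiff ℝ 1 ζ) :
    ContDiff ℝ 1 (powerTest β r u ζ) :=
  ((contDiff_abs_rpow_mul_self hβ).comp hu).mul (hζ.rpow_const_of_le (by exact_mod_cast hr))

variable {E : Type*} [NormedAddCommGroup E] [InnerProductSpace ℝ E] [CompleteSpace E]
  {u ζ : E → ℝ} {x : E}

lemma gradient_powerTest (hβ : 0 < β) (hr : 1 ≤ r) (hu : DifferentiableAt ℝ u x)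
    (hζ : DifferentiableAt ℝ ζ x) :
    ∇ (powerTest β r u ζ) x = ((β + 1) * |u x| ^ β * ζ x ^ r) • ∇ u x +
      (|u x| ^ β * u x * (r * ζ x ^ (r - 1))) • ∇ ζ x := by
  have hpow_u := (hasDerivAt_abs_rpow_mul_self hβ (u x)).comp_hasFDerivAt x
    hu.hasGradientAt.hasFDerivAt
  have hpow_ζ := hζ.hasGradientAt.hasFDerivAt.rpow_const (p := r) (Or.inr hr)
  refine HasGradientAt.gradient (hasGradientAt_iff_hasFDerivAt.2 ?_)
  refine (hpow_u.mul hpow_ζ).congr_fderiv (ContinuousLinearMap.ext fun v => ?_)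
  simp only [Function.comp_apply, toDual_gradient, add_apply, smul_apply, smul_eq_mul, map_add,
    map_smul]
  ring

end PowerTest

section StableSolution

open scoped Gradient

variable {E : Type*} [NormedAddCommGroup E] [InnerProductSpace ℝ E] {p lam : ℝ}

lemma norm_rpow_mul_inner_sq_le (v w : E) :
    ‖v‖ ^ (p - 4) * ⟪v, w⟫ ^ 2 ≤ ‖v‖ ^ (p - 2) * ‖w‖ ^ 2 := by
  rcases eq_or_ne v 0 with rfl | hv
  · rw [inner_zero_left, zero_pow two_ne_zero, mul_zero]
    positivity
  · have hv₀ : 0 < ‖v‖ := norm_pos_iff.2 hv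
    have hsplit : ‖v‖ ^ (p - 2) = ‖v‖ ^ (p - 4) * ‖v‖ ^ 2 := by
      rw [← Real.rpow_add_natCast hv₀.ne']
      congr 1
      push_cast
      ring
    have hsq : ⟪v, w⟫ ^ 2 ≤ (‖v‖ * ‖w‖) ^ 2 :=
      sq_le_sq.2 ((abs_real_inner_le_norm v w).trans (le_abs_self _))
    calc ‖v‖ ^ (p - 4) * ⟪v, w⟫ ^ 2 ≤ ‖v‖ ^ (p - 4) * (‖v‖ * ‖w‖) ^ 2 := by gcongr
      _ = ‖v‖ ^ (p - 2) * ‖w‖ ^ 2 := by rw [hsplit]; ring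

variable [CompleteSpace E] {u φ : E → ℝ} {x : E}

/-- The integrand of the weak formulation of `-Δ_p u = |u|^(λ-1) u`, both sides gathered. -/
noncomputable def weakDensity (p lam : ℝ) (u φ : E → ℝ) (x : E) : ℝ :=
  ‖∇ u x‖ ^ (p - 2) * ⟪∇ u x, ∇ φ x⟫ - |u x| ^ (lam - 1) * u x * φ x

lemma weakDensity_eq (x : E) :
    weakDensity p lam u φ x =
      ⟪‖∇ u x‖ ^ (p - 2) • ∇ u x, ∇ φ x⟫ - |u x| ^ (lam - 1) * u x * φ x := by
  rw [weakDensity, real_inner_smul_left]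

/-- The integrand of the second variation at `u` of the energy associated with
`-Δ_p u = |u|^(λ-1) u`, evaluated at `φ`. -/
noncomputable def stabilityDensity (p lam : ℝ) (u φ : E → ℝ) (x : E) : ℝ :=
  ‖∇ u x‖ ^ (p - 2) * ‖∇ φ x‖ ^ 2 +
    ((p - 2) * ‖∇ u x‖ ^ (p - 4) * ⟪∇ u x, ∇ φ x⟫ ^ 2 - lam * |u x| ^ (lam - 1) * φ x ^ 2)

lemma stabilityDensity_le (hp : 2 ≤ p) :
    stabilityDensity p lam u φ x ≤
      (p - 1) * (‖∇ u x‖ ^ (p - 2) * ‖∇ φ x‖ ^ 2) - lam * (|u x| ^ (lam - 1) * φ x ^ 2) := by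
  have := mul_le_mul_of_nonneg_left (norm_rpow_mul_inner_sq_le (p := p) (∇ u x) (∇ φ x))
    (sub_nonneg.2 hp)
  unfold stabilityDensity
  linarith

variable [MeasurableSpace E]

/-- `u` is a weak solution of `-Δ_p u = |u|^(λ-1) u` with respect to the measure `μ`. -/
def IsWeakSolution (μ : Measure E) (p lam : ℝ) (u : E → ℝ) : Prop :=
  ∀ φ : E → ℝ, ContDiff ℝ (⊤ : ℕ∞) φ → HasCompactSupport φ →
    ∫ x, ‖∇ u x‖ ^ (p - 2) * ⟪∇ u x, ∇ φ x⟫ ∂μ = ∫ x, |u x| ^ (lam - 1) * u x * φ x ∂μ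

/-- `u` is stable with respect to the measure `μ`: the second variation of the energy associated
with `-Δ_p u = |u|^(λ-1) u` is nonnegative at `u`. -/
def IsStable (μ : Measure E) (p lam : ℝ) (u : E → ℝ) : Prop :=
  ∀ φ : E → ℝ, ContDiff ℝ 1 φ → HasCompactSupport φ → 0 ≤ ∫ x, stabilityDensity p lam u φ x ∂μ

end StableSolution

section C1Approximation

open Metric
open scoped Convolution Gradient ContDiff

variable {E : Type*} [NormedAddCommGroup E]

lemma exists_forall_dist_normed_convolution_le {F : Type*} [NormedSpace ℝ E]
    [FiniteDimensional ℝ E] [MeasurableSpace E] [BorelSpace E] [NormedAddCommGroup F]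
    [NormedSpace ℝ F] [CompleteSpace F] {g : E → F} {ε : ℝ} (μ : Measure E) [μ.IsAddHaarMeasure]
    (hg : UniformContinuous g) (hε : 0 < ε) :
    ∃ δ > 0, ∀ ρ : ContDiffBump (0 : E), ρ.rOut ≤ δ → ∀ x,
      dist ((ρ.normed μ ⋆[.lsmul ℝ ℝ, μ] g) x) (g x) ≤ ε := by
  obtain ⟨δ, hδ, hgδ⟩ := uniformContinuous_iff.1 hg ε hε
  refine ⟨δ, hδ, fun ρ hρ x => ρ.dist_normed_convolution_le ?_ fun y hy => ?_⟩
  · exact hg.continuous.aestronglyMeasurable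
  · exact (hgδ ((mem_ball.1 hy).trans_le hρ)).le

lemma tsupport_normed_convolution_subset {F : Type*} [NormedSpace ℝ E] [FiniteDimensional ℝ E]
    [MeasurableSpace E] [BorelSpace E] [NormedAddCommGroup F] [NormedSpace ℝ F] (μ : Measure E)
    [μ.IsAddHaarMeasure] (ρ : ContDiffBump (0 : E)) (g : E → F) :
    tsupport (ρ.normed μ ⋆[.lsmul ℝ ℝ, μ] g) ⊆ cthickening ρ.rOut (tsupport g) := by
  refine closure_minimal ((support_convolution_subset_swap _).trans ?_) isClosed_cthickening
  rintro _ ⟨y, hy, w, hw, rfl⟩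
  rw [ρ.support_normed_eq, mem_ball_zero_iff] at hw
  refine mem_cthickening_of_dist_le _ y _ _ (subset_tsupport _ hy) ?_
  simpa only [dist_self_add_left] using hw.le

variable [InnerProductSpace ℝ E] [FiniteDimensional ℝ E] {φ : E → ℝ} {ε : ℝ}

lemma exists_contDiff_approx_gradient (hφ : ContDiff ℝ 1 φ) (hφc : HasCompactSupport φ)
    (hε : 0 < ε) :
    ∃ ψ : E → ℝ, ContDiff ℝ ∞ ψ ∧ tsupport ψ ⊆ cthickening 1 (tsupport φ) ∧
      (∀ x, |φ x - ψ x| ≤ ε) ∧ ∀ x, ‖∇ φ x - ∇ ψ x‖ ≤ ε := by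
  borelize E
  obtain ⟨δ₀, hδ₀, happrox⟩ := exists_forall_dist_normed_convolution_le volume
    (hφc.uniformContinuous_of_continuous hφ.continuous) hε
  obtain ⟨δ₁, hδ₁, happrox_fderiv⟩ := exists_forall_dist_normed_convolution_le volume
    ((hφc.fderiv ℝ).uniformContinuous_of_continuous (hφ.continuous_fderiv one_ne_zero)) hε
  obtain ⟨δ, hδ, hδ_lt⟩ := exists_between (lt_min (lt_min hδ₀ hδ₁) one_pos)
  simp only [lt_min_iff] at hδ_lt
  let ρ : ContDiffBump (0 : E) := ⟨δ / 2, δ, half_pos hδ, half_lt_self hδ⟩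
  refine ⟨ρ.normed volume ⋆[.lsmul ℝ ℝ, volume] φ, ?_, ?_, fun x => ?_, fun x => ?_⟩
  · exact ρ.hasCompactSupport_normed.contDiff_convolution_left _ ρ.contDiff_normed
      hφ.continuous.locallyIntegrable
  · exact (tsupport_normed_convolution_subset _ ρ φ).trans (cthickening_mono hδ_lt.2.le _)
  · rw [abs_sub_comm, ← Real.dist_eq]
    exact happrox ρ hδ_lt.1.1.le x
  · have hfderiv := (hφc.hasFDerivAt_convolution_right (μ := volume) (.lsmul ℝ ℝ)
      (ρ.continuous_normed (μ := volume)).locallyIntegrable hφ x).fderiv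
    rw [norm_gradient_sub_gradient, hfderiv, norm_sub_rev, ← dist_eq_norm]
    exact happrox_fderiv ρ hδ_lt.1.2.le x

end C1Approximation

section Integrability

open scoped Gradient

lemma integrable_mul_rpow {X : Type*} [TopologicalSpace X] [MeasurableSpace X]
    [OpensMeasurableSpace X] {μ : Measure X} [IsFiniteMeasureOnCompacts μ] {f ζ : X → ℝ} {q : ℝ}
    (hq : 0 < q) (hf : Continuous f) (hζ : Continuous ζ) (hζc : HasCompactSupport ζ) :
    Integrable (fun x => f x * ζ x ^ q) μ :=
  (hf.mul (hζ.rpow_const fun _ => Or.inr hq.le)).integrable_of_hasCompactSupport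
    (hζc.comp_left (g := fun s : ℝ => s ^ q) (Real.zero_rpow hq.ne')).mul_left

variable {E : Type*} [NormedAddCommGroup E] [InnerProductSpace ℝ E] [CompleteSpace E]
  [MeasurableSpace E] [BorelSpace E] {μ : Measure E} [IsFiniteMeasureOnCompacts μ]
  {p lam q ε : ℝ} {u φ ζ f : E → ℝ} {F : E → E}

lemma integrable_norm_gradient_rpow (hq : 0 < q) (hζ : ContDiff ℝ 1 ζ)
    (hζc : HasCompactSupport ζ) : Integrable (fun x => ‖∇ ζ x‖ ^ q) μ := by
  simpa only [one_mul] using integrable_mul_rpow (μ := μ) (f := fun _ => 1) hq continuous_const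
    (continuous_gradient hζ).norm (hasCompactSupport_gradient hζc).norm

lemma integrable_inner_gradient (hF : Continuous F) (hφ : ContDiff ℝ 1 φ)
    (hφc : HasCompactSupport φ) : Integrable (fun x => ⟪F x, ∇ φ x⟫) μ := by
  refine (hF.inner (continuous_gradient hφ)).integrable_of_hasCompactSupport ?_
  refine HasCompactSupport.intro hφc fun x hx => ?_
  rw [gradient_eq_zero_of_notMem_tsupport hx, inner_zero_right]

lemma integrable_inner_gradient_sub_mul (hF : Continuous F) (hf : Continuous f)
    (hφ : ContDiff ℝ 1 φ) (hφc : HasCompactSupport φ) :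
    Integrable (fun x => ⟪F x, ∇ φ x⟫ - f x * φ x) μ :=
  (integrable_inner_gradient hF hφ hφc).sub
    ((hf.mul hφ.continuous).integrable_of_hasCompactSupport hφc.mul_left)

lemma abs_integral_inner_gradient_sub_mul_le {K : Set E} (hF : Continuous F) (hf : Continuous f)
    (hK : IsCompact K) (hφK : tsupport φ ⊆ K) (hφ : ∀ x, |φ x| ≤ ε) (hφ' : ∀ x, ‖∇ φ x‖ ≤ ε) :
    |∫ x, (⟪F x, ∇ φ x⟫ - f x * φ x) ∂μ| ≤ ε * ∫ x in K, (‖F x‖ + |f x|) ∂μ := by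
  have hint : IntegrableOn (fun x => ε * (‖F x‖ + |f x|)) K μ :=
    (continuous_const.mul (hF.norm.add hf.abs)).continuousOn.integrableOn_compact hK
  rw [← integral_const_mul, ← Real.norm_eq_abs, ← setIntegral_eq_integral_of_forall_compl_eq_zero]
  · refine norm_integral_le_of_norm_le hint (Filter.Eventually.of_forall fun x => ?_)
    calc ‖⟪F x, ∇ φ x⟫ - f x * φ x‖
        ≤ ‖⟪F x, ∇ φ x⟫‖ + ‖f x * φ x‖ := norm_sub_le _ _
      _ ≤ ‖F x‖ * ε + |f x| * ε := by
        rw [norm_mul, Real.norm_eq_abs (f x)]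
        gcongr
        · exact (norm_inner_le_norm _ _).trans (by gcongr; exact hφ' x)
        · exact hφ x
      _ = ε * (‖F x‖ + |f x|) := by ring
  · intro x hx
    have hx' : x ∉ tsupport φ := fun h => hx (hφK h)
    rw [gradient_eq_zero_of_notMem_tsupport hx', image_eq_zero_of_notMem_tsupport hx',
      inner_zero_right, mul_zero, sub_zero]

lemma integrable_weakDensity (hp : 2 ≤ p) (hlam : 1 < lam) (hu : ContDiff ℝ 1 u)
    (hφ : ContDiff ℝ 1 φ) (hφc : HasCompactSupport φ) : Integrable (weakDensity p lam u φ) μ :=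
  (integrable_inner_gradient_sub_mul (continuous_norm_gradient_rpow_smul hp hu)
    (continuous_abs_rpow_mul_self (sub_pos.2 hlam).le hu.continuous) hφ hφc).congr
    (.of_forall fun x => (weakDensity_eq x).symm)

lemma integrable_stabilityDensity (hp : 2 ≤ p) (hlam : 1 < lam) (hu : ContDiff ℝ 1 u)
    (hφ : ContDiff ℝ 1 φ) (hφc : HasCompactSupport φ) :
    Integrable (stabilityDensity p lam u φ) μ := by
  have hgrad : Integrable (fun x => ‖∇ u x‖ ^ (p - 2) * ‖∇ φ x‖ ^ 2) μ := by
    refine Continuous.integrable_of_hasCompactSupport ?_ ?_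
    · exact ((continuous_gradient hu).norm.rpow_const fun _ => Or.inr (sub_nonneg.2 hp)).mul
        ((continuous_gradient hφ).norm.pow 2)
    · exact ((hasCompactSupport_gradient hφc).norm.comp_left (g := (· ^ 2))
        (zero_pow two_ne_zero)).mul_left
  have hinner : Integrable
      (fun x => (p - 2) * ‖∇ u x‖ ^ (p - 4) * ⟪∇ u x, ∇ φ x⟫ ^ 2) μ := by
    -- `‖∇u‖ ^ (p - 4)` is singular at critical points of `u` if `p < 4`.
    refine (hgrad.const_mul (p - 2)).mono' ?_ (.of_forall fun x => ?_)
    · exact ((((continuous_gradient hu).norm.measurable.pow_const _).const_mul _).mul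
        (((continuous_gradient hu).inner (continuous_gradient hφ)).pow 2).measurable
        ).aestronglyMeasurable
    · have hp₂ : 0 ≤ p - 2 := sub_nonneg.2 hp
      rw [Real.norm_of_nonneg (by positivity), mul_assoc]
      exact mul_le_mul_of_nonneg_left (norm_rpow_mul_inner_sq_le _ _) hp₂
  have hzero : Integrable (fun x => lam * |u x| ^ (lam - 1) * φ x ^ 2) μ := by
    refine Continuous.integrable_of_hasCompactSupport ?_ ?_
    · exact (continuous_const.mul (hu.continuous.abs.rpow_const fun _ =>
        Or.inr (sub_pos.2 hlam).le)).mul (hφ.continuous.pow 2)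
    · exact (hφc.comp_left (g := (· ^ 2)) (zero_pow two_ne_zero)).mul_left
  exact hgrad.add (hinner.sub hzero)

end Integrability

section WeakFormulation

open Filter Metric Topology
open scoped Gradient ContDiff

variable {E : Type*} [NormedAddCommGroup E] [InnerProductSpace ℝ E] [FiniteDimensional ℝ E]
  [MeasurableSpace E]
  [BorelSpace E] {μ : Measure E} [IsFiniteMeasureOnCompacts μ] {p lam : ℝ} {u φ f : E → ℝ}
  {F : E → E}

lemma integral_inner_gradient_sub_mul_eq_zero (hF : Continuous F) (hf : Continuous f)
    (h : ∀ ψ : E → ℝ, ContDiff ℝ ∞ ψ → HasCompactSupport ψ →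
      ∫ x, (⟪F x, ∇ ψ x⟫ - f x * ψ x) ∂μ = 0)
    (hφ : ContDiff ℝ 1 φ) (hφc : HasCompactSupport φ) :
    ∫ x, (⟪F x, ∇ φ x⟫ - f x * φ x) ∂μ = 0 := by
  set K := cthickening 1 (tsupport φ)
  have hK : IsCompact K := hφc.isCompact.cthickening
  have hbound (ε : ℝ) (hε : 0 < ε) :
      |∫ x, (⟪F x, ∇ φ x⟫ - f x * φ x) ∂μ| ≤ ε * ∫ x in K, (‖F x‖ + |f x|) ∂μ := by
    obtain ⟨ψ, hψ, hψK, hφψ, hφψ'⟩ := exists_contDiff_approx_gradient hφ hφc hε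
    have hψc : HasCompactSupport ψ := HasCompactSupport.of_support_subset_isCompact hK
      ((subset_tsupport ψ).trans hψK)
    have hψ₁ : ContDiff ℝ 1 ψ := hψ.of_le (by exact_mod_cast le_top)
    have hgrad (x : E) : ∇ (φ - ψ) x = ∇ φ x - ∇ ψ x :=
      gradient_sub (hφ.differentiable one_ne_zero x) (hψ₁.differentiable one_ne_zero x)
    have hsub (x : E) : ⟪F x, ∇ φ x⟫ - f x * φ x - (⟪F x, ∇ ψ x⟫ - f x * ψ x) =
        ⟪F x, ∇ (φ - ψ) x⟫ - f x * (φ - ψ) x := by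
      rw [hgrad, inner_sub_right, Pi.sub_apply]
      ring
    rw [← sub_zero (∫ x, _ ∂μ), ← h ψ hψ hψc,
      ← integral_sub (integrable_inner_gradient_sub_mul hF hf hφ hφc)
        (integrable_inner_gradient_sub_mul hF hf hψ₁ hψc), integral_congr_ae (.of_forall hsub)]
    refine abs_integral_inner_gradient_sub_mul_le hF hf hK ?_ hφψ fun x => ?_
    · exact (tsupport_sub φ ψ).trans (Set.union_subset (self_subset_cthickening _) hψK)
    · rw [hgrad]
      exact hφψ' x
  have hlim : Tendsto (fun ε => ε * ∫ x in K, (‖F x‖ + |f x|) ∂μ) (𝓝[>] 0) (𝓝 0) :=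
    ((continuous_mul_const _).tendsto' 0 0 (zero_mul _)).mono_left nhdsWithin_le_nhds
  exact abs_nonpos_iff.1 (ge_of_tendsto hlim (Filter.eventually_of_mem self_mem_nhdsWithin hbound))

lemma IsWeakSolution.integral_weakDensity_eq_zero (hp : 2 ≤ p) (hlam : 1 < lam)
    (hu : ContDiff ℝ 1 u) (hweak : IsWeakSolution μ p lam u) (hφ : ContDiff ℝ 1 φ)
    (hφc : HasCompactSupport φ) : ∫ x, weakDensity p lam u φ x ∂μ = 0 := by
  have hF := continuous_norm_gradient_rpow_smul hp hu
  have hf := continuous_abs_rpow_mul_self (sub_pos.2 hlam).le hu.continuous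
  simp only [weakDensity_eq]
  refine integral_inner_gradient_sub_mul_eq_zero hF hf (fun ψ hψ hψc => ?_) hφ hφc
  have hψ₁ : ContDiff ℝ 1 ψ := hψ.of_le (by exact_mod_cast le_top)
  have hint : Integrable (fun x => |u x| ^ (lam - 1) * u x * ψ x) μ :=
    (hf.mul hψ₁.continuous).integrable_of_hasCompactSupport hψc.mul_left
  rw [integral_sub (integrable_inner_gradient hF hψ₁ hψc) hint, sub_eq_zero]
  simpa only [real_inner_smul_left] using hweak ψ hψ hψc

end WeakFormulation

section PointwiseEstimates

open scoped Gradient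

variable {p lam β r : ℝ}

lemma rpow_eq_rpow_mul_rpow {s a b c : ℝ} (hs : 0 ≤ s) (hb : 0 ≤ b) (hc : 0 ≤ c) (h : a = b + c) :
    s ^ a = s ^ b * s ^ c :=
  h ▸ Real.rpow_add_of_nonneg hs hb hc

lemma abs_rpow_mul_powerTest_sq {X : Type*} {u ζ : X → ℝ} {x : X} (hlam : 1 < lam) (hβ : 0 < β)
    (hr : 0 ≤ r) (hζ : 0 ≤ ζ x) :
    |u x| ^ (lam - 1) * powerTest β r u ζ x ^ 2 = |u x| ^ (lam + (2 * β + 1)) * ζ x ^ (2 * r) := by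
  have hu_pow : |u x| ^ (lam + (2 * β + 1)) =
      |u x| ^ (lam - 1) * (|u x| ^ (β + 1) * |u x| ^ (β + 1)) := by
    rw [← rpow_eq_rpow_mul_rpow (abs_nonneg _) (by linarith) (by linarith) rfl]
    exact rpow_eq_rpow_mul_rpow (abs_nonneg _) (by linarith) (by linarith) (by ring)
  rw [hu_pow, rpow_eq_rpow_mul_rpow hζ hr hr (two_mul r),
    Real.rpow_add_one' (abs_nonneg _) (by linarith), powerTest]
  linear_combination -(|u x| ^ (lam - 1) * (|u x| ^ β) ^ 2 * (ζ x ^ r) ^ 2) * sq_abs (u x)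

lemma abs_rpow_mul_self_mul_powerTest {X : Type*} {u ζ : X → ℝ} {x : X} (hlam : 1 < lam)
    (hβ : 0 < β) :
    |u x| ^ (lam - 1) * u x * powerTest β r u ζ x = |u x| ^ (lam + (β + 1)) * ζ x ^ r := by
  have hu_pow : |u x| ^ (lam + (β + 1)) = |u x| ^ (lam - 1) * (|u x| ^ β * |u x| ^ (2 : ℝ)) := by
    rw [← rpow_eq_rpow_mul_rpow (abs_nonneg _) hβ.le zero_le_two rfl]
    exact rpow_eq_rpow_mul_rpow (abs_nonneg _) (by linarith) (by linarith) (by ring)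
  rw [hu_pow, Real.rpow_two, sq_abs, powerTest]
  ring

variable {E : Type*} [NormedAddCommGroup E] [InnerProductSpace ℝ E] [CompleteSpace E]
  {u ζ : E → ℝ} {x : E}

/-- The terms of homogeneity `θ` in `∇ζ` that arise from testing with powers of `u` and `ζ`. -/
noncomputable def crossTerm (p γ q θ : ℝ) (u ζ : E → ℝ) (x : E) : ℝ :=
  ‖∇ u x‖ ^ (p - θ) * |u x| ^ (γ - 1 + θ) * ζ x ^ (q - θ) * ‖∇ ζ x‖ ^ θ

lemma norm_gradient_powerTest_le (hβ : 0 < β) (hr : 1 ≤ r) (hu : DifferentiableAt ℝ u x)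
    (hζ : DifferentiableAt ℝ ζ x) (hζ₀ : 0 ≤ ζ x) :
    ‖∇ (powerTest β r u ζ) x‖ ≤ (β + 1) * |u x| ^ β * ζ x ^ r * ‖∇ u x‖ +
      r * |u x| ^ (β + 1) * ζ x ^ (r - 1) * ‖∇ ζ x‖ := by
  rw [gradient_powerTest hβ hr hu hζ]
  refine (norm_add_le _ _).trans_eq ?_
  rw [norm_smul, norm_smul, norm_mul, norm_mul, norm_mul, norm_mul,
    Real.rpow_add_one' (abs_nonneg _) (by linarith)]
  simp only [Real.norm_eq_abs]
  rw [abs_of_nonneg (by positivity : 0 ≤ β + 1), abs_of_nonneg (by positivity : 0 ≤ |u x| ^ β),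
    abs_of_nonneg (by positivity : 0 ≤ ζ x ^ r),
    abs_of_nonneg (by positivity : 0 ≤ r * ζ x ^ (r - 1))]
  ring

lemma norm_gradient_rpow_mul_norm_gradient_powerTest_sq_le (hp : 2 ≤ p) (hβ : 0 < β) (hr : 1 ≤ r)
    (hu : DifferentiableAt ℝ u x) (hζ : DifferentiableAt ℝ ζ x) (hζ₀ : 0 ≤ ζ x) :
    ‖∇ u x‖ ^ (p - 2) * ‖∇ (powerTest β r u ζ) x‖ ^ 2 ≤
      (β + 1) ^ 2 * crossTerm p (2 * β + 1) (2 * r) 0 u ζ x +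
        2 * (β + 1) * r * crossTerm p (2 * β + 1) (2 * r) 1 u ζ x +
        r ^ 2 * crossTerm p (2 * β + 1) (2 * r) 2 u ζ x := by
  have hgrad := norm_gradient_powerTest_le hβ hr hu hζ hζ₀
  unfold crossTerm
  set a := ‖∇ u x‖
  set t := |u x|
  set z := ζ x
  set d := ‖∇ ζ x‖
  have ha : 0 ≤ a := norm_nonneg _
  have ht : 0 ≤ t := abs_nonneg _
  have hz : 0 ≤ z := hζ₀
  have hp₂ : 0 ≤ p - 2 := sub_nonneg.2 hp
  have hr₁ : 0 ≤ r - 1 := sub_nonneg.2 hr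
  have hr₀ : 0 ≤ r := by linarith
  have hβ₁ : 0 ≤ β + 1 := by linarith
  have ha₀ : a ^ (p - 0) = a ^ (p - 2) * a ^ (2 : ℝ) :=
    rpow_eq_rpow_mul_rpow ha hp₂ zero_le_two (by ring)
  have ha₁ : a ^ (p - 1) = a ^ (p - 2) * a ^ (1 : ℝ) :=
    rpow_eq_rpow_mul_rpow ha hp₂ zero_le_one (by ring)
  have ht₀ : t ^ (2 * β + 1 - 1 + 0) = t ^ β * t ^ β :=
    rpow_eq_rpow_mul_rpow ht hβ.le hβ.le (by ring)
  have ht₁ : t ^ (2 * β + 1 - 1 + 1) = t ^ β * t ^ (β + 1) :=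
    rpow_eq_rpow_mul_rpow ht hβ.le hβ₁ (by ring)
  have ht₂ : t ^ (2 * β + 1 - 1 + 2) = t ^ (β + 1) * t ^ (β + 1) :=
    rpow_eq_rpow_mul_rpow ht hβ₁ hβ₁ (by ring)
  have hz₀ : z ^ (2 * r - 0) = z ^ r * z ^ r := rpow_eq_rpow_mul_rpow hz hr₀ hr₀ (by ring)
  have hz₁ : z ^ (2 * r - 1) = z ^ r * z ^ (r - 1) := rpow_eq_rpow_mul_rpow hz hr₀ hr₁ (by ring)
  have hz₂ : z ^ (2 * r - 2) = z ^ (r - 1) * z ^ (r - 1) :=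
    rpow_eq_rpow_mul_rpow hz hr₁ hr₁ (by ring)
  rw [ha₀, ha₁, ht₀, ht₁, ht₂, hz₀, hz₁, hz₂, Real.rpow_zero, Real.rpow_two,
    Real.rpow_one, Real.rpow_one, Real.rpow_two]
  calc a ^ (p - 2) * ‖∇ (powerTest β r u ζ) x‖ ^ 2
      ≤ a ^ (p - 2) * ((β + 1) * t ^ β * z ^ r * a + r * t ^ (β + 1) * z ^ (r - 1) * d) ^ 2 := by
        gcongr
    _ = _ := by ring

lemma stabilityDensity_powerTest_le (hp : 2 ≤ p) (hlam : 1 < lam) (hβ : 0 < β) (hr : 1 ≤ r)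
    (hu : DifferentiableAt ℝ u x) (hζ : DifferentiableAt ℝ ζ x) (hζ₀ : 0 ≤ ζ x) :
    stabilityDensity p lam u (powerTest β r u ζ) x ≤
      (p - 1) * ((β + 1) ^ 2 * crossTerm p (2 * β + 1) (2 * r) 0 u ζ x +
        2 * (β + 1) * r * crossTerm p (2 * β + 1) (2 * r) 1 u ζ x +
        r ^ 2 * crossTerm p (2 * β + 1) (2 * r) 2 u ζ x) -
      lam * (|u x| ^ (lam + (2 * β + 1)) * ζ x ^ (2 * r)) := by
  have hp₁ : 0 ≤ p - 1 := by linarith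
  refine (stabilityDensity_le hp).trans ?_
  rw [abs_rpow_mul_powerTest_sq hlam hβ (by linarith) hζ₀]
  gcongr
  exact norm_gradient_rpow_mul_norm_gradient_powerTest_sq_le hp hβ hr hu hζ hζ₀

lemma le_weakDensity_powerTest (hp : 2 ≤ p) (hlam : 1 < lam) (hβ : 0 < β) (hr : 1 ≤ r)
    (hu : DifferentiableAt ℝ u x) (hζ : DifferentiableAt ℝ ζ x) (hζ₀ : 0 ≤ ζ x) :
    (β + 1) * crossTerm p (β + 1) r 0 u ζ x - r * crossTerm p (β + 1) r 1 u ζ x -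
        |u x| ^ (lam + (β + 1)) * ζ x ^ r ≤
      weakDensity p lam u (powerTest β r u ζ) x := by
  have hinner : -(|u x| ^ (β + 1) * (‖∇ u x‖ * ‖∇ ζ x‖)) ≤
      |u x| ^ β * u x * ⟪∇ u x, ∇ ζ x⟫ := by
    apply neg_le_of_abs_le
    rw [abs_mul, abs_mul, abs_of_nonneg (by positivity : 0 ≤ |u x| ^ β),
      Real.rpow_add_one' (abs_nonneg _) (by linarith)]
    gcongr
    exact abs_real_inner_le_norm _ _
  have hp₂ : 0 ≤ p - 2 := sub_nonneg.2 hp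
  have ha := norm_nonneg (∇ u x)
  have ha₀ : ‖∇ u x‖ ^ (p - 0) = ‖∇ u x‖ ^ (p - 2) * ‖∇ u x‖ ^ (2 : ℝ) :=
    rpow_eq_rpow_mul_rpow ha hp₂ zero_le_two (by ring)
  have ha₁ : ‖∇ u x‖ ^ (p - 1) = ‖∇ u x‖ ^ (p - 2) * ‖∇ u x‖ ^ (1 : ℝ) :=
    rpow_eq_rpow_mul_rpow ha hp₂ zero_le_one (by ring)
  have hmul := mul_le_mul_of_nonneg_left hinner
    (by positivity : 0 ≤ ‖∇ u x‖ ^ (p - 2) * (r * ζ x ^ (r - 1)))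
  rw [weakDensity, abs_rpow_mul_self_mul_powerTest hlam hβ, gradient_powerTest hβ hr hu hζ,
    inner_add_right, real_inner_smul_right, real_inner_smul_right, real_inner_self_eq_norm_sq,
    crossTerm, crossTerm, ha₀, ha₁, add_sub_cancel_right, add_zero, sub_zero, Real.rpow_zero,
    Real.rpow_two, Real.rpow_one, Real.rpow_one]
  linarith

end PointwiseEstimates

section EnergyEstimate

open scoped Gradient

variable {E : Type*} [NormedAddCommGroup E] [InnerProductSpace ℝ E] {p lam γ : ℝ}

lemma exists_mul_crossTerm_le [CompleteSpace E] {θ K ε : ℝ} (hp : 1 < p) (hlam : p - 1 < lam)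
    (hγ : 1 < γ) (hθ : 0 < θ) (hθp : θ ≤ p) (hK : 0 ≤ K) (hε : 0 < ε) :
    ∃ C, 0 ≤ C ∧ ∀ (u ζ : E → ℝ) (x : E), 0 ≤ ζ x →
      K * crossTerm p γ (energyExponent p lam γ) θ u ζ x ≤
        ε * (|u x| ^ (lam + γ) * ζ x ^ energyExponent p lam γ +
          crossTerm p γ (energyExponent p lam γ) 0 u ζ x) +
          C * ‖∇ ζ x‖ ^ energyExponent p lam γ := by
  obtain ⟨C, hC, hYoung⟩ :=
    exists_mul_rpow_mul_rpow_mul_rpow_mul_rpow_le hp hlam hγ hθ hθp hK hε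
  refine ⟨C, hC, fun u ζ x hζ => ?_⟩
  simpa only [crossTerm, sub_zero, add_zero, Real.rpow_zero, mul_one] using
    hYoung ‖∇ u x‖ |u x| (ζ x) ‖∇ ζ x‖ (norm_nonneg _) (abs_nonneg _) hζ (norm_nonneg _)

lemma crossTerm_zero_nonneg [CompleteSpace E] {q : ℝ} {u ζ : E → ℝ} {x : E} (hζ : 0 ≤ ζ x) :
    0 ≤ crossTerm p γ q 0 u ζ x := by
  unfold crossTerm
  positivity

lemma exists_mul_crossTerm_one_add_mul_crossTerm_two_le [CompleteSpace E] {K₁ K₂ ε : ℝ}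
    (hp : 2 ≤ p) (hlam : p - 1 < lam) (hγ : 1 < γ) (hK₁ : 0 ≤ K₁) (hK₂ : 0 ≤ K₂) (hε : 0 < ε) :
    ∃ C, 0 ≤ C ∧ ∀ (u ζ : E → ℝ) (x : E), 0 ≤ ζ x →
      K₁ * crossTerm p γ (energyExponent p lam γ) 1 u ζ x +
          K₂ * crossTerm p γ (energyExponent p lam γ) 2 u ζ x ≤
        ε * (|u x| ^ (lam + γ) * ζ x ^ energyExponent p lam γ +
          crossTerm p γ (energyExponent p lam γ) 0 u ζ x) +
          C * ‖∇ ζ x‖ ^ energyExponent p lam γ := by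
  have hp₁ : 1 < p := by linarith
  obtain ⟨C₁, hC₁, hYoung₁⟩ :=
    exists_mul_crossTerm_le (E := E) hp₁ hlam hγ one_pos hp₁.le hK₁ (half_pos hε)
  obtain ⟨C₂, hC₂, hYoung₂⟩ :=
    exists_mul_crossTerm_le (E := E) hp₁ hlam hγ two_pos hp hK₂ (half_pos hε)
  refine ⟨C₁ + C₂, add_nonneg hC₁ hC₂, fun u ζ x hζ => ?_⟩
  linarith [hYoung₁ u ζ x hζ, hYoung₂ u ζ x hζ]

-- The equation is subtracted with a factor `c` between the threshold and `λ`: then both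
-- `|∇u|^p |u|^(γ-1) ζ^q` and `|u|^(λ+γ) ζ^q` keep a negative coefficient.
lemma exists_stabilityDensity_sub_mul_weakDensity_le [CompleteSpace E] (hp : 2 ≤ p)
    (hlam : p - 1 < lam) (hγ : 1 < γ) (hthreshold : powerThreshold p γ < lam) :
    ∃ c δ C, 0 < δ ∧ 0 ≤ C ∧ ∀ (u ζ : E → ℝ) (x : E), DifferentiableAt ℝ u x →
      DifferentiableAt ℝ ζ x → 0 ≤ ζ x →
      stabilityDensity p lam u
          (powerTest ((γ - 1) / 2) (energyExponent p lam γ / 2) u ζ) x -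
        c * weakDensity p lam u (powerTest (γ - 1) (energyExponent p lam γ) u ζ) x ≤
      C * ‖∇ ζ x‖ ^ energyExponent p lam γ -
        δ * (|u x| ^ (lam + γ) * ζ x ^ energyExponent p lam γ) := by
  have hq : p < energyExponent p lam γ := lt_energyExponent (by linarith) hlam hγ
  have hp₁ : 0 ≤ p - 1 := by linarith
  have hq₀ : 0 ≤ energyExponent p lam γ := by linarith
  obtain ⟨c, hc_gt, hc_lt⟩ := exists_between hthreshold
  have hc : 0 ≤ c := le_trans (by unfold powerThreshold; positivity) hc_gt.le
  rw [powerThreshold, div_lt_iff₀ (by linarith)] at hc_gt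
  have hε : 0 < min (c * γ - (p - 1) * (γ + 1) ^ 2 / 4) ((lam - c) / 2) :=
    lt_min (by linarith) (by linarith)
  have hK₁ : 0 ≤ (p - 1) * (γ + 1) * energyExponent p lam γ / 2 + c * energyExponent p lam γ := by
    positivity
  have hK₂ : 0 ≤ (p - 1) * energyExponent p lam γ ^ 2 / 4 := by positivity
  obtain ⟨C, hC, hYoung⟩ :=
    exists_mul_crossTerm_one_add_mul_crossTerm_two_le (E := E) hp hlam hγ hK₁ hK₂ hε
  refine ⟨c, (lam - c) / 2, C, by linarith, hC, fun u ζ x hu hζ hζ₀ => ?_⟩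
  have hstab := stabilityDensity_powerTest_le (β := (γ - 1) / 2) (lam := lam)
    (r := energyExponent p lam γ / 2) hp (by linarith) (by linarith) (by linarith) hu hζ hζ₀
  have hweak := mul_le_mul_of_nonneg_left (le_weakDensity_powerTest (β := γ - 1) (lam := lam)
    (r := energyExponent p lam γ) hp (by linarith) (by linarith) (by linarith) hu hζ hζ₀) hc
  have hβ : 2 * ((γ - 1) / 2) + 1 = γ := by ring
  rw [hβ, mul_div_cancel₀ _ two_ne_zero] at hstab
  rw [sub_add_cancel] at hweak
  have habsorb_grad := mul_le_mul_of_nonneg_right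
    (min_le_left (c * γ - (p - 1) * (γ + 1) ^ 2 / 4) ((lam - c) / 2))
    (crossTerm_zero_nonneg (p := p) (γ := γ) (q := energyExponent p lam γ) (u := u) hζ₀)
  have habsorb_power := mul_le_mul_of_nonneg_right
    (min_le_right (c * γ - (p - 1) * (γ + 1) ^ 2 / 4) ((lam - c) / 2))
    (by positivity : 0 ≤ |u x| ^ (lam + γ) * ζ x ^ energyExponent p lam γ)
  linarith [hYoung u ζ x hζ₀]

variable [FiniteDimensional ℝ E] [MeasurableSpace E] [BorelSpace E] {μ : Measure E}
  [IsFiniteMeasureOnCompacts μ] {u : E → ℝ}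

lemma exists_integral_abs_rpow_mul_rpow_le (hp : 2 ≤ p) (hlam : p - 1 < lam) (hγ : 1 < γ)
    (hthreshold : powerThreshold p γ < lam) (hu : ContDiff ℝ 1 u)
    (hweak : IsWeakSolution μ p lam u) (hstable : IsStable μ p lam u) :
    ∃ C, 0 ≤ C ∧ ∀ ζ : E → ℝ, ContDiff ℝ 1 ζ → HasCompactSupport ζ → (∀ x, 0 ≤ ζ x) →
      ∫ x, |u x| ^ (lam + γ) * ζ x ^ energyExponent p lam γ ∂μ ≤
        C * ∫ x, ‖∇ ζ x‖ ^ energyExponent p lam γ ∂μ := by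
  have hq : p < energyExponent p lam γ := lt_energyExponent (by linarith) hlam hγ
  have hlam₁ : 1 < lam := by linarith
  obtain ⟨c, δ, C, hδ, hC, hpointwise⟩ :=
    exists_stabilityDensity_sub_mul_weakDensity_le (E := E) hp hlam hγ hthreshold
  refine ⟨C / δ, by positivity, fun ζ hζ hζc hζ₀ => ?_⟩
  set q := energyExponent p lam γ
  set ψ := powerTest ((γ - 1) / 2) (q / 2) u ζ
  set φ := powerTest (γ - 1) q u ζ
  have hψ : ContDiff ℝ 1 ψ := contDiff_powerTest (by linarith) (by linarith) hu hζ
  have hφ : ContDiff ℝ 1 φ := contDiff_powerTest (by linarith) (by linarith) hu hζ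
  have hψc : HasCompactSupport ψ := hasCompactSupport_powerTest (by linarith) hζc
  have hφc : HasCompactSupport φ := hasCompactSupport_powerTest (by linarith) hζc
  have hS : Integrable (stabilityDensity p lam u ψ) μ :=
    integrable_stabilityDensity hp hlam₁ hu hψ hψc
  have hW : Integrable (fun x => c * weakDensity p lam u φ x) μ :=
    (integrable_weakDensity hp hlam₁ hu hφ hφc).const_mul c
  have hD : Integrable (fun x => C * ‖∇ ζ x‖ ^ q) μ :=
    (integrable_norm_gradient_rpow (by linarith) hζ hζc).const_mul C
  have hX : Integrable (fun x => δ * (|u x| ^ (lam + γ) * ζ x ^ q)) μ :=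
    (integrable_mul_rpow (by linarith)
      (hu.continuous.abs.rpow_const fun _ => Or.inr (by linarith)) hζ.continuous hζc).const_mul δ
  have hintegral := calc
    0 ≤ ∫ x, stabilityDensity p lam u ψ x ∂μ := hstable ψ hψ hψc
    _ = ∫ x, (stabilityDensity p lam u ψ x - c * weakDensity p lam u φ x) ∂μ := by
      rw [integral_sub hS hW, integral_const_mul,
        hweak.integral_weakDensity_eq_zero hp hlam₁ hu hφ hφc, mul_zero, sub_zero]
    _ ≤ ∫ x, (C * ‖∇ ζ x‖ ^ q - δ * (|u x| ^ (lam + γ) * ζ x ^ q)) ∂μ :=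
      integral_mono (hS.sub hW) (hD.sub hX) fun x => hpointwise u ζ x
        (hu.differentiable one_ne_zero x) (hζ.differentiable one_ne_zero x) (hζ₀ x)
    _ = C * ∫ x, ‖∇ ζ x‖ ^ q ∂μ - δ * ∫ x, |u x| ^ (lam + γ) * ζ x ^ q ∂μ := by
      rw [integral_sub hD hX, integral_const_mul, integral_const_mul]
  rw [div_mul_eq_mul_div, le_div_iff₀ hδ]
  linarith

end EnergyEstimate

section Cutoff

open Filter Metric Topology Module
open scoped Gradient

variable {E : Type*} [NormedAddCommGroup E] [InnerProductSpace ℝ E]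
  [FiniteDimensional ℝ E]

variable (E) in
lemma exists_cutoff : ∃ M, 0 ≤ M ∧ ∀ R > 0, ∃ ζ : E → ℝ, ContDiff ℝ 1 ζ ∧
    tsupport ζ ⊆ closedBall 0 (2 * R) ∧ (∀ x, 0 ≤ ζ x) ∧ (∀ x ∈ closedBall 0 R, ζ x = 1) ∧
    ∀ x, ‖∇ ζ x‖ ≤ M / R := by
  let χ : ContDiffBump (0 : E) := ⟨1, 2, one_pos, one_lt_two⟩
  have hχ : ContDiff ℝ 1 χ := χ.contDiff
  obtain ⟨M, hM⟩ := (continuous_gradient hχ).bounded_above_of_compact_support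
    (hasCompactSupport_gradient χ.hasCompactSupport)
  refine ⟨M, (norm_nonneg _).trans (hM 0), fun R hR => ⟨fun x => χ (R⁻¹ • x), ?_, ?_, ?_, ?_, ?_⟩⟩
  · exact hχ.comp (contDiff_const_smul _)
  · refine closure_minimal (fun x hx => ?_) isClosed_closedBall
    by_contra hx_out
    rw [mem_closedBall_zero_iff, not_le] at hx_out
    refine hx (χ.zero_of_le_dist ?_)
    rw [dist_zero_right, norm_smul, norm_inv, Real.norm_of_nonneg hR.le, le_inv_mul_iff₀ hR]
    linarith [show χ.rOut = 2 from rfl]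
  · exact fun x => χ.nonneg
  · intro x hx
    apply χ.one_of_mem_closedBall
    rw [mem_closedBall_zero_iff] at hx ⊢
    rw [norm_smul, norm_inv, Real.norm_of_nonneg hR.le, inv_mul_le_iff₀ hR]
    linarith [show χ.rIn = 1 from rfl]
  · intro x
    rw [gradient_comp_const_smul, norm_smul, norm_inv, Real.norm_of_nonneg hR.le, div_eq_inv_mul]
    gcongr
    exact hM _

variable [MeasurableSpace E] [BorelSpace E] {μ : Measure E} [μ.IsAddHaarMeasure]

lemma integral_norm_gradient_rpow_le {q M R : ℝ} {ζ : E → ℝ} (hq : 0 < q) (hM : 0 ≤ M)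
    (hR : 0 < R) (hζ : tsupport ζ ⊆ closedBall 0 (2 * R)) (hgrad : ∀ x, ‖∇ ζ x‖ ≤ M / R) :
    ∫ x, ‖∇ ζ x‖ ^ q ∂μ ≤
      M ^ q * 2 ^ finrank ℝ E * μ.real (ball 0 1) * R ^ (-(q - finrank ℝ E)) := by
  rw [← setIntegral_eq_integral_of_forall_compl_eq_zero (s := closedBall 0 (2 * R))]
  · have hbound := norm_setIntegral_le_of_norm_le_const (μ := μ) (C := (M / R) ^ q)
      (f := fun x => ‖∇ ζ x‖ ^ q) (measure_closedBall_lt_top (x := 0) (r := 2 * R)) fun x _ => by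
        rw [Real.norm_of_nonneg (by positivity)]
        gcongr
        exact hgrad x
    refine (Real.le_norm_self _).trans (hbound.trans_eq ?_)
    rw [Measure.addHaar_real_closedBall _ _ (by positivity), Real.div_rpow hM hR.le, neg_sub,
      Real.rpow_sub hR, Real.rpow_natCast, mul_pow]
    ring
  · intro x hx
    rw [gradient_eq_zero_of_notMem_tsupport fun h => hx (hζ h), norm_zero, Real.zero_rpow hq.ne']

lemma setIntegral_closedBall_eq_zero_of_integral_mul_rpow_le {f : E → ℝ} {q C : ℝ}
    (hf : Continuous f) (hf₀ : ∀ x, 0 ≤ f x) (hq : finrank ℝ E < q) (hC : 0 ≤ C)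
    (henergy : ∀ ζ : E → ℝ, ContDiff ℝ 1 ζ → HasCompactSupport ζ → (∀ x, 0 ≤ ζ x) →
      ∫ x, f x * ζ x ^ q ∂μ ≤ C * ∫ x, ‖∇ ζ x‖ ^ q ∂μ) (r : ℝ) :
    ∫ x in closedBall 0 r, f x ∂μ = 0 := by
  have hq₀ : 0 < q := (Nat.cast_nonneg _).trans_lt hq
  obtain ⟨M, hM, hcutoff⟩ := exists_cutoff E
  set V := M ^ q * 2 ^ finrank ℝ E * μ.real (ball (0 : E) 1)
  have hbound : ∀ R ≥ max r 1,
      ∫ x in closedBall 0 r, f x ∂μ ≤ C * (V * R ^ (-(q - finrank ℝ E))) := by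
    intro R hR
    obtain ⟨hrR, hR₁⟩ := max_le_iff.1 hR
    have hR₀ : 0 < R := by linarith
    obtain ⟨ζ, hζ, hζ_supp, hζ₀, hζ_one, hζ_grad⟩ := hcutoff R hR₀
    have hζc : HasCompactSupport ζ := (isCompact_closedBall 0 (2 * R)).of_isClosed_subset
      (isClosed_tsupport ζ) hζ_supp
    calc ∫ x in closedBall 0 r, f x ∂μ = ∫ x in closedBall 0 r, f x * ζ x ^ q ∂μ := by
          refine setIntegral_congr_fun measurableSet_closedBall fun x hx => ?_
          rw [hζ_one x (closedBall_subset_closedBall hrR hx), Real.one_rpow, mul_one]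
      _ ≤ ∫ x, f x * ζ x ^ q ∂μ := by
          exact setIntegral_le_integral (integrable_mul_rpow hq₀ hf hζ.continuous hζc)
            (.of_forall fun x => mul_nonneg (hf₀ x) (Real.rpow_nonneg (hζ₀ x) q))
      _ ≤ C * ∫ x, ‖∇ ζ x‖ ^ q ∂μ := henergy ζ hζ hζc hζ₀
      _ ≤ C * (V * R ^ (-(q - finrank ℝ E))) := by
          gcongr
          exact integral_norm_gradient_rpow_le hq₀ hM hR₀ hζ_supp hζ_grad
  have hlim : Tendsto (fun R : ℝ => C * (V * R ^ (-(q - finrank ℝ E)))) atTop (𝓝 0) := by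
    simpa only [mul_zero] using
      ((tendsto_rpow_neg_atTop (sub_pos.2 hq)).const_mul V).const_mul C
  exact le_antisymm (ge_of_tendsto hlim (eventually_atTop.2 ⟨max r 1, hbound⟩))
    (integral_nonneg hf₀)

lemma eq_zero_of_integral_mul_rpow_le {f : E → ℝ} {q C : ℝ}
    (hf : Continuous f) (hf₀ : ∀ x, 0 ≤ f x) (hq : finrank ℝ E < q) (hC : 0 ≤ C)
    (henergy : ∀ ζ : E → ℝ, ContDiff ℝ 1 ζ → HasCompactSupport ζ → (∀ x, 0 ≤ ζ x) →
      ∫ x, f x * ζ x ^ q ∂μ ≤ C * ∫ x, ‖∇ ζ x‖ ^ q ∂μ) : f = 0 := by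
  refine (Continuous.ae_eq_iff_eq μ hf continuous_const).1 ?_
  rw [← Measure.restrict_univ (μ := μ), ← iUnion_closedBall_nat (0 : E)]
  refine (ae_restrict_iUnion_iff _ _).2 fun n => ?_
  exact (setIntegral_eq_zero_iff_of_nonneg_ae (.of_forall hf₀)
    (hf.continuousOn.integrableOn_compact (isCompact_closedBall _ _))).1
    (setIntegral_closedBall_eq_zero_of_integral_mul_rpow_le hf hf₀ hq hC henergy n)

end Cutoff

theorem liouville_stable_general {E : Type*} [NormedAddCommGroup E] [InnerProductSpace ℝ E]
    [FiniteDimensional ℝ E] [MeasurableSpace E] [BorelSpace E] {μ : Measure E}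
    [μ.IsAddHaarMeasure] {p lam : ℝ} {u : E → ℝ} (hp : 2 ≤ p) (hlam : p - 1 < lam)
    (hcrit : (Module.finrank ℝ E : ℝ) > p * (p + 3) / (p - 1) →
      lam < LambdaC (Module.finrank ℝ E) p)
    (hu : ContDiff ℝ 1 u) (hweak : IsWeakSolution μ p lam u) (hstable : IsStable μ p lam u) :
    ∀ x, u x = 0 := by
  obtain ⟨γ, hγ, hthreshold, hdim⟩ := exists_admissible_testPower (by linarith) hlam hcrit
  obtain ⟨C, hC, henergy⟩ :=
    exists_integral_abs_rpow_mul_rpow_le hp hlam hγ hthreshold hu hweak hstable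
  have hexp : 0 < lam + γ := by linarith
  have hzero : (fun x => |u x| ^ (lam + γ)) = 0 := eq_zero_of_integral_mul_rpow_le
    (hu.continuous.abs.rpow_const fun _ => Or.inr hexp.le)
    (fun x => Real.rpow_nonneg (abs_nonneg _) _) hdim hC henergy
  exact fun x => abs_eq_zero.1 ((Real.rpow_eq_zero (abs_nonneg _) hexp.ne').1 (congrFun hzero x))

/-- **Lemma 3.2, Liouville theorem for stable solutions.** Let `p > 2`, with
`p - 1 < λ`, and `λ < Λ_c(N, p)` in case `N > p(p+3)/(p-1)`. If `u ∈ C¹(ℝ^N)` is a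
stable weak solution of `-Δ_p u = |u|^{λ-1} u` on all of `ℝ^N`, then `u ≡ 0`. -/
theorem liouville_stable
    (N : ℕ) (p lam : ℝ) (hp : 2 < p)
    (hlam₁ : p - 1 < lam)
    (hlam₂ : (N : ℝ) > p * (p + 3) / (p - 1) → lam < LambdaC N p)
    (u : EuclideanSpace ℝ (Fin N) → ℝ) (hu : ContDiff ℝ 1 u)
    -- `u` is a weak solution of `-Δ_p u = |u|^{λ-1} u` on `ℝ^N`
    (hweak : ∀ φ : EuclideanSpace ℝ (Fin N) → ℝ,
      ContDiff ℝ (⊤ : ℕ∞) φ → HasCompactSupport φ →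
      ∫ x, ‖gradient u x‖ ^ (p - 2) * ⟪gradient u x, gradient φ x⟫ =
        ∫ x, |u x| ^ (lam - 1) * u x * φ x)
    -- `u` is stable
    (hstable : ∀ φ : EuclideanSpace ℝ (Fin N) → ℝ,
      ContDiff ℝ 1 φ → HasCompactSupport φ →
      0 ≤ ∫ x,
        (‖gradient u x‖ ^ (p - 2) * ‖gradient φ x‖ ^ 2 +
          ((p - 2) * ‖gradient u x‖ ^ (p - 4) * ⟪gradient u x, gradient φ x⟫ ^ 2 -
            lam * |u x| ^ (lam - 1) * φ x ^ 2))) :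
    ∀ x, u x = 0 := by
  exact liouville_stable_general (μ := volume) hp.le hlam₁
    (by rwa [finrank_euclideanSpace_fin]) hu hweak hstable
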